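/- Let D be a lattice in ℳ(𝔽). Then at least one of the following holds: (i) τD = D (and then pD^∨ ⊂² D ⊂² D^∨); (ii) there is a τ-stable lattice L with L = L^∨ and pL^∨ ⊂¹ pD^∨ ⊂² D ⊂¹ L; (iii) there is a τ-stable lattice L with L = pL^∨ and pD^∨ ⊂¹ pL^∨, L ⊂¹ D ⊂² D^∨ ⊂¹ L^∨. -/

import Mathlib

/-!
Write `δ D` for the dual of `D` and suppose `τ D ≠ D`. The length conditions force
`D ⋖ D ⊔ τ D ⋖ δ D` and `p δ D ⋖ D ⊓ τ D ⋖ D`, and comparing with the dual relations gives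
`δ D ⊓ τ (δ D) = D ⊔ τ D` and `p (δ D ⊔ τ (δ D)) = D ⊓ τ D`. Hence `D ⊔ τ D` is its own dual and
`D ⊓ τ D` is `p` times its own dual, and it remains to see that one of them is `τ`-stable. If
neither is, then `τ (δ D) = (D ⊔ τ D) ⊔ τ (D ⊔ τ D)` and `τ D = (D ⊓ τ D) ⊔ τ (D ⊓ τ D)`. A
`τ`-stable lattice `X` containing `D` then contains `δ D ⊔ τ (δ D)`, so `p X` contains `D ⊓ τ D` and
therefore `D`. For the smallest `τ`-stable lattice `X` containing `D` this gives `X ≤ p X`,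
contradicting Nakayama's lemma.
-/

open Pointwise

noncomputable section

variable (p : ℕ) [Fact p.Prime] (𝔽 : Type) [Field 𝔽] [IsAlgClosed 𝔽] [CharP 𝔽 p]

/-- The Witt ring `W(𝔽)`. -/
abbrev Wp := WittVector p 𝔽

/-- The fraction field `K` of `W(𝔽)`. -/
abbrev Kp := FractionRing (Wp p 𝔽)

/-- `N₀ = K⁴`. -/
abbrev N0 := Fin 4 → Kp p 𝔽

/-- The symplectic form on `N₀`. -/
def omegaForm (x y : N0 p 𝔽) : Kp p 𝔽 :=
  x 0 * y 3 - x 3 * y 0 + x 1 * y 2 - x 2 * y 1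

/-- The dual lattice of a `W`-submodule of `N₀`. -/
def dualL (D : Submodule (Wp p 𝔽) (N0 p 𝔽)) : Submodule (Wp p 𝔽) (N0 p 𝔽) where
  carrier := {x | ∀ d ∈ D, omegaForm p 𝔽 x d ∈ (algebraMap (Wp p 𝔽) (Kp p 𝔽)).range}
  zero_mem' := by
    intro d hd
    have : omegaForm p 𝔽 0 d = 0 := by simp [omegaForm]
    rw [this]; exact zero_mem _
  add_mem' := by
    intro x y hx hy d hd
    have : omegaForm p 𝔽 (x + y) d = omegaForm p 𝔽 x d + omegaForm p 𝔽 y d := by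
      simp [omegaForm]; ring
    rw [this]; exact add_mem (hx d hd) (hy d hd)
  smul_mem' := by
    intro c x hx d hd
    have : omegaForm p 𝔽 (c • x) d
        = algebraMap (Wp p 𝔽) (Kp p 𝔽) c * omegaForm p 𝔽 x d := by
      simp [omegaForm, Algebra.smul_def]; ring
    rw [this]; exact mul_mem ⟨c, rfl⟩ (hx d hd)

variable (σ : Kp p 𝔽 ≃+* Kp p 𝔽)

/-- The semilinear map `τ` on `N₀`, applying `σ` to each coordinate. -/
def tauFun (x : N0 p 𝔽) : N0 p 𝔽 := fun i => σ (x i)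

/-- The lattice `τD` generated by the image of `D` under `τ`. -/
def tauL (D : Submodule (Wp p 𝔽) (N0 p 𝔽)) : Submodule (Wp p 𝔽) (N0 p 𝔽) :=
  Submodule.span (Wp p 𝔽) (tauFun p 𝔽 σ '' D)

/-- `D` is a lattice in `N₀`: finitely generated over `W` and spanning `N₀` over `K`. -/
def IsLattice (D : Submodule (Wp p 𝔽) (N0 p 𝔽)) : Prop :=
  D.FG ∧ Submodule.span (Kp p 𝔽) (D : Set (N0 p 𝔽)) = ⊤

/-- The length of the `W`-module `B / A` (as the Krull dimension of its submodule
lattice). -/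
def relLength (A B : Submodule (Wp p 𝔽) (N0 p 𝔽)) : WithBot ℕ∞ :=
  Order.krullDim (Submodule (Wp p 𝔽) (B ⧸ (A.comap B.subtype)))

/-- `A ⊂ᵈ B` : `A ⊆ B` with colength `d`. -/
def SubD (d : ℕ) (A B : Submodule (Wp p 𝔽) (N0 p 𝔽)) : Prop :=
  A ≤ B ∧ relLength p 𝔽 A B = (d : WithBot ℕ∞)

/-- Membership in `ℳ(𝔽)`. -/
def memM (D : Submodule (Wp p 𝔽) (N0 p 𝔽)) : Prop :=
  IsLattice p 𝔽 D ∧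
  SubD p 𝔽 2 ((p : Wp p 𝔽) • dualL p 𝔽 D) D ∧
  SubD p 𝔽 2 D (dualL p 𝔽 D) ∧
  SubD p 𝔽 2 ((p : Wp p 𝔽) • dualL p 𝔽 D) (tauL p 𝔽 σ D) ∧
  SubD p 𝔽 2 (tauL p 𝔽 σ D) (dualL p 𝔽 D) ∧
  relLength p 𝔽 D (D ⊔ tauL p 𝔽 σ D) ≤ 1

/-- `σ` is the automorphism of `K` induced by the Witt-vector Frobenius. -/
def IsWittFrobenius : Prop :=
  ∀ w : Wp p 𝔽, σ (algebraMap (Wp p 𝔽) (Kp p 𝔽) w)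
    = algebraMap (Wp p 𝔽) (Kp p 𝔽) (WittVector.frobeniusEquiv p 𝔽 w)

section Order

variable {α : Type*} [Lattice α]

theorem sup_eq_of_covBy {a b c : α} (hab : a ⋖ b) (hcb : c ≤ b) (hca : ¬c ≤ a) : a ⊔ c = b :=
  (hab.eq_or_eq le_sup_left (sup_le hab.le hcb)).resolve_left fun h => hca (sup_eq_left.1 h)

theorem inf_eq_of_covBy {a b c : α} (hab : a ⋖ b) (hac : a ≤ c) (hbc : ¬b ≤ c) : b ⊓ c = a :=
  sup_eq_of_covBy (α := αᵒᵈ) hab.toDual hac hbc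

theorem eq_of_covBy_of_le {a b c : α} (hab : a ⋖ b) (hac : a ⋖ c) (hbc : b ≤ c) : b = c :=
  (hac.eq_or_eq hab.le hbc).resolve_left hab.ne'

/-- The descent step, with `e` in the role of the dual of `d` and `s` in that of multiplication by
`p`: the bound `d ≤ x` propagates along `d ⊔ t d`, `t e`, `e`, `d ⊓ t d`, `t d` to `d ≤ s x`. -/
theorem le_of_map_sup_ne_of_map_inf_ne {t : α ≃o α} {s : α → α} {d e x : α}
    (hs : Monotone s) (hd : d ⋖ d ⊔ t d) (htd : t d ⋖ d ⊔ t d) (he : d ⊔ t d ⋖ e)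
    (hte : d ⊔ t d ≤ t e) (hinf : d ⊓ t d ⋖ d) (hinf' : d ⊓ t d ⋖ t d)
    (hse : d ⊓ t d = s (e ⊔ t e)) (hsup_ne : t (d ⊔ t d) ≠ d ⊔ t d)
    (hinf_ne : t (d ⊓ t d) ≠ d ⊓ t d) (hx : t x = x) (hsx : t (s x) = s x) (hdx : d ≤ x) :
    d ≤ s x := by
  have le_of_map_le {y z : α} (hz : t z = z) (h : t y ≤ z) : y ≤ z := by
    rwa [← t.le_iff_le, hz]
  have map_le {y z : α} (hz : t z = z) (h : y ≤ z) : t y ≤ z := by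
    rwa [← hz, t.le_iff_le]
  have te_eq : t (d ⊔ t d) ⊔ (d ⊔ t d) = t e :=
    sup_eq_of_covBy ((apply_covBy_apply_iff t).2 he) hte fun h =>
      hsup_ne (eq_of_covBy_of_le htd ((apply_covBy_apply_iff t).2 hd) h).symm
  have td_eq : d ⊓ t d ⊔ t (d ⊓ t d) = t d :=
    hinf'.wcovBy.sup_eq ((apply_covBy_apply_iff t).2 hinf).wcovBy hinf_ne.symm
  have sup_le_x : d ⊔ t d ≤ x := sup_le hdx (map_le hx hdx)
  have te_le_x : t e ≤ x := te_eq ▸ sup_le (map_le hx sup_le_x) sup_le_x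
  have inf_le_sx : d ⊓ t d ≤ s x := hse ▸ hs (sup_le (le_of_map_le hx te_le_x) te_le_x)
  exact le_of_map_le hsx (td_eq ▸ sup_le inf_le_sx (map_le hsx inf_le_sx))

end Order

section Colength

variable {R M : Type*} [Ring R] [AddCommGroup M] [Module R M] {A B C D : Submodule R M}

/-- The length of the module `B / A` for submodules `A ≤ B`; as `A` is first intersected with `B`,
it makes sense for arbitrary `A` and `B`. -/
def colength (A B : Submodule R M) : ℕ∞ := Module.length R (B ⧸ A.submoduleOf B)

theorem colength_add_colength (hAB : A ≤ B) (hBC : B ≤ C) :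
    colength A B + colength B C = colength A C := by
  let f : (B ⧸ A.submoduleOf B) →ₗ[R] C ⧸ A.submoduleOf C :=
    (A.submoduleOf B).mapQ (A.submoduleOf C) (Submodule.inclusion hBC) le_rfl
  have hle : A.submoduleOf C ≤ B.submoduleOf C := Submodule.comap_mono hAB
  have hf : Function.Injective f := by
    rw [← LinearMap.ker_eq_bot]
    exact Submodule.ker_liftQ_eq_bot _ _ _ (by simp [LinearMap.ker_comp]; rfl)
  have hfg : Function.Exact f (Submodule.factor hle) := by
    rw [LinearMap.exact_iff, show f.range = _ from Submodule.range_mapQ ..,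
      Submodule.range_inclusion]
    exact (Submodule.ker_liftQ _ _ _).trans (by rw [LinearMap.comp_id, Submodule.ker_mkQ]; rfl)
  exact (Module.length_eq_add_of_exact f _ hf (Submodule.factor_surjective hle) hfg).symm

theorem colength_eq_zero_iff : colength A B = 0 ↔ B ≤ A := by
  rw [colength, Module.length_eq_zero_iff, Submodule.Quotient.subsingleton_iff,
    Submodule.submoduleOf_eq_top]

theorem colength_eq_one_iff (h : A ≤ B) : colength A B = 1 ↔ A ⋖ B := by
  rw [colength, Module.length_eq_one_iff, covBy_iff_quot_is_simple h]
  rfl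

theorem covBy_of_colength_le_one (hlt : A < B) (h : colength A B ≤ 1) : A ⋖ B := by
  rw [← colength_eq_one_iff hlt.le]
  exact le_antisymm h (Order.one_le_iff_ne_zero.2 fun h0 => hlt.not_ge (colength_eq_zero_iff.1 h0))

theorem eq_of_colength_eq {n : ℕ} (hAB : A ≤ B) (hBC : B ≤ C) (hA : colength A C = n)
    (hB : colength B C = n) : A = B := by
  refine hAB.antisymm (colength_eq_zero_iff.1 ?_)
  have h := colength_add_colength hAB hBC
  rw [hA, hB] at h
  simpa using h

theorem covBy_right_of_colength_eq_two (h : colength A C = 2) (hAB : A ⋖ B) (hBC : B ≤ C) :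
    B ⋖ C := by
  rw [← colength_eq_one_iff hBC]
  refine ENat.add_right_injective_of_ne_top (n := 1) (by decide) ?_
  change 1 + colength B C = 1 + 1
  rw [← (colength_eq_one_iff hAB.le).2 hAB, colength_add_colength hAB.le hBC, h,
    (colength_eq_one_iff hAB.le).2 hAB, one_add_one_eq_two]

theorem covBy_left_of_colength_eq_two (h : colength A C = 2) (hAB : A ≤ B) (hBC : B ⋖ C) :
    A ⋖ B := by
  rw [← colength_eq_one_iff hAB]
  refine ENat.add_left_injective_of_ne_top (n := 1) (by decide) ?_
  change colength A B + 1 = 1 + 1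
  rw [← (colength_eq_one_iff hBC.le).2 hBC, colength_add_colength hAB hBC.le, h,
    (colength_eq_one_iff hBC.le).2 hBC, one_add_one_eq_two]

end Colength

section Dual

variable {R K V : Type*} [CommRing R] [Field K] [Algebra R K] [AddCommGroup V] [Module K V]
  [Module R V] [IsScalarTower R K V] (B : LinearMap.BilinForm K V)

theorem dualSubmodule_anti {M N : Submodule R V} (h : M ≤ N) :
    B.dualSubmodule N ≤ B.dualSubmodule M :=
  fun _ hx y hy => hx y (h hy)

theorem dualSubmodule_sup (M N : Submodule R V) :
    B.dualSubmodule (M ⊔ N) = B.dualSubmodule M ⊓ B.dualSubmodule N := by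
  refine eq_of_forall_le_iff fun L => ?_
  simp_rw [le_inf_iff, ← B.le_flip_dualSubmodule (N₂ := L), sup_le_iff]

theorem smul_dualSubmodule_smul {r : R} (hr : algebraMap R K r ≠ 0) (N : Submodule R V) :
    r • B.dualSubmodule (r • N) = B.dualSubmodule N := by
  have B_smul_left (x y : V) : B (r • x) y = B x (r • y) := by
    rw [LinearMap.map_smul_of_tower, LinearMap.map_smul_of_tower, LinearMap.smul_apply]
  ext x
  rw [Submodule.mem_smul_pointwise_iff_exists]
  constructor
  · rintro ⟨y, hy, rfl⟩ z hz
    exact B_smul_left y z ▸ hy (r • z) (Submodule.smul_mem_pointwise_smul z r N hz)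
  · intro hx
    have r_smul : r • (algebraMap R K r)⁻¹ • x = x := by
      rw [← algebraMap_smul K r, smul_inv_smul₀ hr]
    refine ⟨(algebraMap R K r)⁻¹ • x, fun z hz => ?_, r_smul⟩
    obtain ⟨w, hw, rfl⟩ := (Submodule.mem_smul_pointwise_iff_exists _ _ _).1 hz
    rw [← B_smul_left, r_smul]
    exact hx w hw

theorem map_dualSubmodule {φ φ' : R →+* R} [RingHomInvPair φ φ'] [RingHomInvPair φ' φ]
    (τ : V ≃ₛₗ[φ] V) (hτ : ∀ x y, B (τ x) (τ y) ∈ (1 : Submodule R K) ↔ B x y ∈ (1 : Submodule R K))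
    (N : Submodule R V) :
    (B.dualSubmodule N).map (τ : V →ₛₗ[φ] V) = B.dualSubmodule (N.map (τ : V →ₛₗ[φ] V)) := by
  ext x
  obtain ⟨x, rfl⟩ := τ.surjective x
  have mem_map (y : V) (L : Submodule R V) : τ y ∈ L.map (τ : V →ₛₗ[φ] V) ↔ y ∈ L :=
    τ.injective.mem_set_image
  rw [mem_map, LinearMap.BilinForm.mem_dualSubmodule, LinearMap.BilinForm.mem_dualSubmodule,
    τ.surjective.forall (p := fun y => y ∈ N.map _ → _)]
  exact forall_congr' fun y => by rw [mem_map, hτ]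

variable {B}

theorem flip_dualSubmodule
    (hswap : ∀ x y, B x y ∈ (1 : Submodule R K) → B y x ∈ (1 : Submodule R K))
    (N : Submodule R V) : B.flip.dualSubmodule N = B.dualSubmodule N :=
  Submodule.ext fun x => forall₂_congr fun y _ => ⟨hswap y x, hswap x y⟩

theorem le_dualSubmodule_comm
    (hswap : ∀ x y, B x y ∈ (1 : Submodule R K) → B y x ∈ (1 : Submodule R K))
    {M N : Submodule R V} : M ≤ B.dualSubmodule N ↔ N ≤ B.dualSubmodule M := by
  rw [← flip_dualSubmodule hswap N, LinearMap.BilinForm.le_flip_dualSubmodule]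

theorem dualSubmodule_dualSubmodule [IsDomain R] [IsPrincipalIdealRing R] [IsFractionRing R K]
    (hswap : ∀ x y, B x y ∈ (1 : Submodule R K) → B y x ∈ (1 : Submodule R K))
    (hB : B.Nondegenerate) (N : Submodule R V) [Submodule.IsLattice K N] :
    B.dualSubmodule (B.dualSubmodule N) = N := by
  have := Submodule.IsLattice.free K N
  let b := Module.Free.chooseBasis R N
  have hb : Submodule.span R (Set.range (b.extendOfIsLattice K)) = N := by
    have : ⇑(b.extendOfIsLattice K) = N.subtype ∘ b := by ext; simp
    rw [this, Set.range_comp, Submodule.span_image, b.span_eq, Submodule.map_subtype_top]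
  rw [← flip_dualSubmodule hswap N]
  simpa only [hb] using
    B.dualSubmodule_dualSubmodule_flip_of_basis (R := R) hB (b.extendOfIsLattice K)

end Dual

section Scaling

variable {R V : Type*} [CommRing R] [AddCommGroup V] [Module R V]

theorem smul_eq_smul_of_associated {r s : R} (h : Associated r s) (N : Submodule R V) :
    r • N = s • N := by
  have hspan : Ideal.span {r} = Ideal.span {s} :=
    (Ideal.span_singleton_le_span_singleton.2 h.dvd').antisymm
      (Ideal.span_singleton_le_span_singleton.2 h.dvd)
  rw [← Submodule.ideal_span_singleton_smul, hspan, Submodule.ideal_span_singleton_smul]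

theorem map_smul_of_associated {φ φ' : R →+* R} [RingHomInvPair φ φ'] [RingHomInvPair φ' φ]
    (τ : V ≃ₛₗ[φ] V) {r : R} (h : Associated (φ r) r) (N : Submodule R V) :
    (r • N).map (τ : V →ₛₗ[φ] V) = r • N.map (τ : V →ₛₗ[φ] V) := by
  rw [← smul_eq_smul_of_associated h (N.map _)]
  exact SetLike.coe_injective (image_smul_setₛₗ (τ : V →ₛₗ[φ] V) r (N : Set V))

variable {K : Type*} [Field K] [Algebra R K] [Module K V] [IsScalarTower R K V]

/-- Multiplication by a scalar that becomes invertible in `K`, as an automorphism of the lattice of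
submodules; this is where `V` being a `K`-vector space enters. -/
def smulOrderIso {r : R} (hr : algebraMap R K r ≠ 0) : Submodule R V ≃o Submodule R V :=
  Submodule.orderIsoMapComap (DistribMulAction.toLinearEquiv R V (Units.mk0 (algebraMap R K r) hr))

theorem smulOrderIso_apply {r : R} (hr : algebraMap R K r ≠ 0) (N : Submodule R V) :
    smulOrderIso hr N = r • N :=
  SetLike.coe_injective (Set.image_congr fun x _ => algebraMap_smul K r x)

theorem smul_covBy_smul_iff {r : R} (hr : algebraMap R K r ≠ 0) {M N : Submodule R V} :
    r • M ⋖ r • N ↔ M ⋖ N := by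
  simp only [← smulOrderIso_apply hr, apply_covBy_apply_iff]

theorem isLattice_smul {r : R} (hr : algebraMap R K r ≠ 0) (N : Submodule R V)
    [Submodule.IsLattice K N] : Submodule.IsLattice K (r • N) := by
  have hunits : r • N = Units.mk0 (algebraMap R K r) hr • N :=
    SetLike.coe_injective (Set.image_congr fun x _ => (algebraMap_smul K r x).symm)
  rw [hunits]
  infer_instance

end Scaling

section StableHull

variable {R V : Type*} [CommRing R] [AddCommGroup V] [Module R V]

theorem exists_fixed_not_le_smul [IsNoetherianRing R] [IsLocalRing R] {π : R} (hπ : ¬IsUnit π)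
    {t : Submodule R V ≃o Submodule R V} (ht : ∀ N, t (π • N) = π • t N) {D Λ : Submodule R V}
    (hD : D ≠ ⊥) (hΛ : Λ.FG) (htΛ : t Λ = Λ) (hDΛ : D ≤ Λ) :
    ∃ X, t X = X ∧ D ≤ X ∧ ¬D ≤ π • X := by
  let S : Submodule R V := sInf {X | t X = X ∧ D ≤ X}
  have htS : t S = S := by
    rw [t.map_sInf, show S = _ from sInf_eq_iInf]
    exact biInf_congr fun X hX => hX.1
  have hDS : D ≤ S := le_sInf fun X hX => hX.2
  refine ⟨S, htS, hDS, fun hle => hD (eq_bot_iff.2 (hDS.trans_eq ?_))⟩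
  have hS : S ≤ Ideal.span {π} • S := by
    rw [Submodule.ideal_span_singleton_smul]
    exact sInf_le ⟨by rw [ht, htS], hle⟩
  refine Submodule.eq_bot_of_le_smul_of_le_jacobson_bot _ S (hΛ.of_le (sInf_le ⟨htΛ, hDΛ⟩)) hS ?_
  rw [IsLocalRing.jacobson_eq_maximalIdeal _ bot_ne_top, Ideal.span_singleton_le_iff_mem]
  exact hπ

variable {K : Type*} [Field K] [Algebra R K] [Module K V] [IsScalarTower R K V]

theorem exists_smul_le_of_fg [IsDomain R] [IsFractionRing R K] {D : Submodule R V} (hD : D.FG)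
    (Λ : Submodule R V) [Submodule.IsLattice K Λ] : ∃ r : R, r ≠ 0 ∧ r • D ≤ Λ := by
  have exists_smul_mem (v : V) : ∃ r : R, r ≠ 0 ∧ r • v ∈ Λ := by
    have hv : v ∈ Submodule.span K (Λ : Set V) := by
      rw [Submodule.IsLattice.span_eq_top]
      trivial
    induction hv using Submodule.span_induction with
    | mem v hv => exact ⟨1, one_ne_zero, by rwa [one_smul]⟩
    | zero => exact ⟨1, one_ne_zero, by simp⟩
    | add v w _ _ hv hw =>
      obtain ⟨⟨r, hr, hrv⟩, s, hs, hsw⟩ := hv, hw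
      refine ⟨r * s, mul_ne_zero hr hs, ?_⟩
      rw [smul_add, mul_comm, mul_smul, mul_comm, mul_smul]
      exact add_mem (Λ.smul_mem s hrv) (Λ.smul_mem r hsw)
    | smul c v _ hv =>
      obtain ⟨r, hr, hrv⟩ := hv
      obtain ⟨a, b, hb, rfl⟩ := IsFractionRing.div_surjective (A := R) c
      refine ⟨b * r, mul_ne_zero (nonZeroDivisors.ne_zero hb) hr, ?_⟩
      have hbc : b • (algebraMap R K a / algebraMap R K b) • v = a • v := by
        rw [← algebraMap_smul K b, smul_smul, mul_div_cancel₀, algebraMap_smul]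
        rw [Ne, IsFractionRing.to_map_eq_zero_iff]
        exact nonZeroDivisors.ne_zero hb
      rw [mul_comm, mul_smul, hbc, smul_comm]
      exact Λ.smul_mem a hrv
  induction D, hD using Submodule.fg_induction with
  | singleton v =>
    obtain ⟨r, hr, hrv⟩ := exists_smul_mem v
    refine ⟨r, hr, ?_⟩
    rwa [Submodule.smul_span, Set.smul_set_singleton, Submodule.span_singleton_le_iff_mem]
  | sup M N _ _ hM hN =>
    obtain ⟨⟨r, hr, hrM⟩, s, hs, hsN⟩ := hM, hN
    refine ⟨r * s, mul_ne_zero hr hs, ?_⟩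
    rw [Submodule.smul_sup']
    refine sup_le ?_ ?_
    · rw [mul_comm, mul_smul]
      exact (smul_mono_right s hrM).trans (Submodule.smul_le_self_of_tower s Λ)
    · rw [mul_smul]
      exact (smul_mono_right r hsN).trans (Submodule.smul_le_self_of_tower r Λ)

theorem exists_fixed_fg_ge [IsDomain R] [IsFractionRing R K] {t : Submodule R V ≃o Submodule R V}
    (ht : ∀ (r : R) (N : Submodule R V), t (r • N) = r • t N) {D : Submodule R V} (hD : D.FG)
    (Λ : Submodule R V) [Submodule.IsLattice K Λ] (htΛ : t Λ = Λ) :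
    ∃ X : Submodule R V, X.FG ∧ t X = X ∧ D ≤ X := by
  obtain ⟨r, hr, hrD⟩ := exists_smul_le_of_fg (K := K) hD Λ
  have hr' : algebraMap R K r ≠ 0 := by rwa [Ne, IsFractionRing.to_map_eq_zero_iff]
  let X := (smulOrderIso hr').symm Λ
  have hX : r • X = Λ := by rw [← smulOrderIso_apply hr', OrderIso.apply_symm_apply]
  refine ⟨X, ?_, ?_, ?_⟩
  · rw [show X = _ from Submodule.orderIsoMapComap_symm_apply' _ Λ]
    exact (Submodule.IsLattice.fg (A := K)).map _
  · apply (smulOrderIso hr').injective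
    rw [smulOrderIso_apply, smulOrderIso_apply, ← ht, hX, htΛ]
  · rwa [← (smulOrderIso hr').le_iff_le, smulOrderIso_apply, smulOrderIso_apply, hX]

end StableHull

theorem associated_ringEquiv_apply {R : Type*} [CommRing R] [IsDomain R]
    [IsDiscreteValuationRing R] (φ : R ≃+* R) (r : R) : Associated (φ r) r := by
  rcases eq_or_ne r 0 with rfl | hr
  · rw [map_zero]
  obtain ⟨ϖ, hϖ⟩ := IsDiscreteValuationRing.exists_irreducible R
  obtain ⟨n, hn⟩ := IsDiscreteValuationRing.associated_pow_irreducible hr hϖ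
  have hφϖ : Associated (φ ϖ) ϖ :=
    IsDiscreteValuationRing.associated_of_irreducible R ((MulEquiv.irreducible_iff φ).2 hϖ) hϖ
  calc Associated (φ r) (φ (ϖ ^ n)) := hn.map φ
    _ = φ ϖ ^ n := map_pow φ ϖ n
    Associated _ (ϖ ^ n) := hφϖ.pow_pow
    Associated _ r := hn.symm

section SpecialLattice

variable {R K V : Type*} [CommRing R] [Field K] [Algebra R K] [AddCommGroup V] [Module K V]
  [Module R V] [IsScalarTower R K V] {φ φ' : R →+* R} [RingHomInvPair φ φ'] [RingHomInvPair φ' φ]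

/-- The lattices of `ℳ(𝔽)`, for an arbitrary bilinear form `B` on `V`, semilinear automorphism `τ`
of `V` and scalar `π` in place of `p`. -/
structure IsSpecialLattice (B : LinearMap.BilinForm K V) (τ : V ≃ₛₗ[φ] V) (π : R)
    (D : Submodule R V) : Prop where
  isLattice : Submodule.IsLattice K D
  smul_dual_le : π • B.dualSubmodule D ≤ D
  colength_smul_dual : colength (π • B.dualSubmodule D) D = 2
  le_dual : D ≤ B.dualSubmodule D
  colength_dual : colength D (B.dualSubmodule D) = 2
  smul_dual_le_map : π • B.dualSubmodule D ≤ D.map τ.toLinearMap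
  map_le_dual : D.map τ.toLinearMap ≤ B.dualSubmodule D
  colength_map_dual : colength (D.map τ.toLinearMap) (B.dualSubmodule D) = 2
  colength_sup_le : colength D (D ⊔ D.map τ.toLinearMap) ≤ 1

namespace IsSpecialLattice

variable {B : LinearMap.BilinForm K V} {τ : V ≃ₛₗ[φ] V} {π : R} {D : Submodule R V}

section Covering

variable (h : IsSpecialLattice B τ π D) (hne : D.map τ.toLinearMap ≠ D)
include h hne

theorem not_map_le : ¬D.map τ.toLinearMap ≤ D :=
  fun hle => hne (eq_of_colength_eq hle h.le_dual h.colength_map_dual h.colength_dual)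

theorem not_le_map : ¬D ≤ D.map τ.toLinearMap :=
  fun hle => hne (eq_of_colength_eq hle h.map_le_dual h.colength_dual h.colength_map_dual).symm

theorem covBy_sup : D ⋖ D ⊔ D.map τ.toLinearMap :=
  covBy_of_colength_le_one (left_lt_sup.2 (h.not_map_le hne)) h.colength_sup_le

theorem sup_covBy_dual : D ⊔ D.map τ.toLinearMap ⋖ B.dualSubmodule D :=
  covBy_right_of_colength_eq_two h.colength_dual (h.covBy_sup hne)
    (sup_le h.le_dual h.map_le_dual)

theorem map_covBy_sup : D.map τ.toLinearMap ⋖ D ⊔ D.map τ.toLinearMap :=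
  covBy_left_of_colength_eq_two h.colength_map_dual le_sup_right (h.sup_covBy_dual hne)

theorem inf_covBy : D ⊓ D.map τ.toLinearMap ⋖ D :=
  inf_covBy_of_covBy_sup_right (h.map_covBy_sup hne)

theorem inf_covBy_map : D ⊓ D.map τ.toLinearMap ⋖ D.map τ.toLinearMap :=
  inf_covBy_of_covBy_sup_left (h.covBy_sup hne)

theorem smul_dual_covBy_inf : π • B.dualSubmodule D ⋖ D ⊓ D.map τ.toLinearMap :=
  covBy_left_of_colength_eq_two h.colength_smul_dual (le_inf h.smul_dual_le h.smul_dual_le_map)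
    (h.inf_covBy hne)

end Covering

theorem isLattice_sup (h : IsSpecialLattice B τ π D) :
    Submodule.IsLattice K (D ⊔ D.map τ.toLinearMap) := by
  have := h.isLattice
  exact .of_le_of_isLattice_of_fg K le_sup_left (this.fg.sup (this.fg.map _))

theorem isLattice_inf [IsNoetherianRing R] (h : IsSpecialLattice B τ π D)
    (hπ : algebraMap R K π ≠ 0) : Submodule.IsLattice K (D ⊓ D.map τ.toLinearMap) := by
  have := h.isLattice
  have := isLattice_smul hπ D
  exact .of_le_of_isLattice_of_fg K ((smul_mono_right π h.le_dual).trans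
    (le_inf h.smul_dual_le h.smul_dual_le_map)) (h.isLattice.fg.of_le inf_le_left)

section Duality

theorem sup_le_map_dual (h : IsSpecialLattice B τ π D)
    (hswap : ∀ x y, B x y ∈ (1 : Submodule R K) → B y x ∈ (1 : Submodule R K))
    (hτ : ∀ x y, B (τ x) (τ y) ∈ (1 : Submodule R K) ↔ B x y ∈ (1 : Submodule R K)) :
    D ⊔ D.map τ.toLinearMap ≤ (B.dualSubmodule D).map τ.toLinearMap := by
  refine sup_le ?_ (Submodule.map_mono h.le_dual)
  rw [map_dualSubmodule B τ hτ]
  exact (le_dualSubmodule_comm hswap).1 h.map_le_dual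

variable [IsDomain R] [IsPrincipalIdealRing R] [IsFractionRing R K]

theorem dual_dual (h : IsSpecialLattice B τ π D) (hB : B.Nondegenerate)
    (hswap : ∀ x y, B x y ∈ (1 : Submodule R K) → B y x ∈ (1 : Submodule R K)) :
    B.dualSubmodule (B.dualSubmodule D) = D :=
  have := h.isLattice
  dualSubmodule_dualSubmodule hswap hB D

variable (hB : B.Nondegenerate)
    (hswap : ∀ x y, B x y ∈ (1 : Submodule R K) → B y x ∈ (1 : Submodule R K))
    (hτ : ∀ x y, B (τ x) (τ y) ∈ (1 : Submodule R K) ↔ B x y ∈ (1 : Submodule R K))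
include hB hswap hτ

theorem dual_map_dual (h : IsSpecialLattice B τ π D) :
    B.dualSubmodule ((B.dualSubmodule D).map τ.toLinearMap) = D.map τ.toLinearMap := by
  rw [← map_dualSubmodule B τ hτ, h.dual_dual hB hswap]

theorem smul_map_dual_le_inf (h : IsSpecialLattice B τ π D)
    (hπ : algebraMap R K π ≠ 0) (hφ : Associated (φ π) π) :
    π • (B.dualSubmodule D).map τ.toLinearMap ≤ D ⊓ D.map τ.toLinearMap := by
  refine le_inf ?_ ?_
  · calc π • (B.dualSubmodule D).map τ.toLinearMap
        = π • B.dualSubmodule (D.map τ.toLinearMap) := by rw [map_dualSubmodule B τ hτ]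
      _ ≤ π • B.dualSubmodule (π • B.dualSubmodule D) :=
        smul_mono_right π (dualSubmodule_anti B h.smul_dual_le_map)
      _ = D := by rw [smul_dualSubmodule_smul B hπ, h.dual_dual hB hswap]
  · rw [← map_smul_of_associated τ hφ]
    exact Submodule.map_mono h.smul_dual_le

theorem dual_inf_map_dual (h : IsSpecialLattice B τ π D) (hne : D.map τ.toLinearMap ≠ D) :
    B.dualSubmodule D ⊓ (B.dualSubmodule D).map τ.toLinearMap = D ⊔ D.map τ.toLinearMap := by
  refine inf_eq_of_covBy (h.sup_covBy_dual hne) (h.sup_le_map_dual hswap hτ)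
    fun hle => h.not_map_le hne ?_
  simpa only [h.dual_map_dual hB hswap hτ, h.dual_dual hB hswap] using dualSubmodule_anti B hle

theorem smul_dual_sup_map_dual (h : IsSpecialLattice B τ π D) (hne : D.map τ.toLinearMap ≠ D)
    (hπ : algebraMap R K π ≠ 0) (hφ : Associated (φ π) π) :
    π • (B.dualSubmodule D ⊔ (B.dualSubmodule D).map τ.toLinearMap) =
      D ⊓ D.map τ.toLinearMap := by
  rw [Submodule.smul_sup']
  refine sup_eq_of_covBy (h.smul_dual_covBy_inf hne) (h.smul_map_dual_le_inf hB hswap hτ hπ hφ)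
    fun hle => h.not_le_map hne ?_
  rw [← smulOrderIso_apply hπ, ← smulOrderIso_apply hπ, (smulOrderIso hπ).le_iff_le] at hle
  simpa only [h.dual_map_dual hB hswap hτ, h.dual_dual hB hswap] using dualSubmodule_anti B hle

theorem dual_sup (h : IsSpecialLattice B τ π D) (hne : D.map τ.toLinearMap ≠ D) :
    B.dualSubmodule (D ⊔ D.map τ.toLinearMap) = D ⊔ D.map τ.toLinearMap := by
  rw [dualSubmodule_sup, ← map_dualSubmodule B τ hτ, h.dual_inf_map_dual hB hswap hτ hne]

theorem smul_dual_inf (h : IsSpecialLattice B τ π D) (hne : D.map τ.toLinearMap ≠ D)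
    (hπ : algebraMap R K π ≠ 0) (hφ : Associated (φ π) π) :
    π • B.dualSubmodule (D ⊓ D.map τ.toLinearMap) = D ⊓ D.map τ.toLinearMap := by
  rw [← h.smul_dual_sup_map_dual hB hswap hτ hne hπ hφ, smul_dualSubmodule_smul B hπ,
    dualSubmodule_sup, h.dual_dual hB hswap, h.dual_map_dual hB hswap hτ,
    h.smul_dual_sup_map_dual hB hswap hτ hne hπ hφ]

end Duality

theorem map_sup_eq_or_map_inf_eq [IsDomain R] [IsDiscreteValuationRing R] [IsFractionRing R K]
    (h : IsSpecialLattice B τ π D) (hne : D.map τ.toLinearMap ≠ D) (hB : B.Nondegenerate)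
    (hswap : ∀ x y, B x y ∈ (1 : Submodule R K) → B y x ∈ (1 : Submodule R K))
    (hτ : ∀ x y, B (τ x) (τ y) ∈ (1 : Submodule R K) ↔ B x y ∈ (1 : Submodule R K))
    (hπ : Irreducible π) (Λ : Submodule R V) [Submodule.IsLattice K Λ]
    (hΛ : Λ.map τ.toLinearMap = Λ) :
    (D ⊔ D.map τ.toLinearMap).map τ.toLinearMap = D ⊔ D.map τ.toLinearMap ∨
      (D ⊓ D.map τ.toLinearMap).map τ.toLinearMap = D ⊓ D.map τ.toLinearMap := by
  by_contra! hcon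
  have hπ' : algebraMap R K π ≠ 0 := by simpa using hπ.ne_zero
  have hφ (r : R) : Associated (φ r) r :=
    associated_ringEquiv_apply (RingHomInvPair.toRingEquiv φ φ') r
  let t : Submodule R V ≃o Submodule R V := Submodule.orderIsoMapComap τ
  have ht (r : R) (N : Submodule R V) : t (r • N) = r • t N := map_smul_of_associated τ (hφ r) N
  have hD : D ≠ ⊥ := fun h0 => hne (by rw [h0, Submodule.map_bot])
  obtain ⟨Λ', hΛ', htΛ', hDΛ'⟩ := exists_fixed_fg_ge (K := K) ht h.isLattice.fg Λ hΛ
  obtain ⟨X, htX, hDX, hX⟩ := exists_fixed_not_le_smul hπ.not_isUnit (ht π) hD hΛ' htΛ' hDΛ'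
  exact hX (le_of_map_sup_ne_of_map_inf_ne (t := t) (s := HSMul.hSMul π) (smul_mono_right π)
    (h.covBy_sup hne) (h.map_covBy_sup hne) (h.sup_covBy_dual hne) (h.sup_le_map_dual hswap hτ)
    (h.inf_covBy hne) (h.inf_covBy_map hne)
    (h.smul_dual_sup_map_dual hB hswap hτ hne hπ' (hφ π)).symm hcon.1 hcon.2 htX
    (by rw [ht, htX]) hDX)

end IsSpecialLattice

theorem vertex_lattice_trichotomy_general [IsDomain R] [IsDiscreteValuationRing R]
    [IsFractionRing R K] {B : LinearMap.BilinForm K V} (hB : B.Nondegenerate)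
    (hswap : ∀ x y, B x y ∈ (1 : Submodule R K) → B y x ∈ (1 : Submodule R K))
    {τ : V ≃ₛₗ[φ] V}
    (hτ : ∀ x y, B (τ x) (τ y) ∈ (1 : Submodule R K) ↔ B x y ∈ (1 : Submodule R K))
    {π : R} (hπ : Irreducible π) (Λ : Submodule R V) [Submodule.IsLattice K Λ]
    (hΛ : Λ.map τ.toLinearMap = Λ) {D : Submodule R V} (h : IsSpecialLattice B τ π D) :
    D.map τ.toLinearMap = D ∨
    (∃ L : Submodule R V, Submodule.IsLattice K L ∧ L.map τ.toLinearMap = L ∧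
      L = B.dualSubmodule L ∧ π • B.dualSubmodule L ⋖ π • B.dualSubmodule D ∧ D ⋖ L) ∨
    (∃ L : Submodule R V, Submodule.IsLattice K L ∧ L.map τ.toLinearMap = L ∧
      L = π • B.dualSubmodule L ∧ π • B.dualSubmodule D ⋖ π • B.dualSubmodule L ∧ L ⋖ D ∧
      B.dualSubmodule D ⋖ B.dualSubmodule L) := by
  refine or_iff_not_imp_left.2 fun hne => ?_
  have hπ' : algebraMap R K π ≠ 0 := by simpa using hπ.ne_zero
  have hsup := h.dual_sup hB hswap hτ hne
  have hinf := h.smul_dual_inf hB hswap hτ hne hπ'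
    (associated_ringEquiv_apply (RingHomInvPair.toRingEquiv φ φ') π)
  refine (h.map_sup_eq_or_map_inf_eq hne hB hswap hτ hπ Λ hΛ).imp (fun hfix => ?_) fun hfix => ?_
  · refine ⟨_, h.isLattice_sup, hfix, hsup.symm, ?_, h.covBy_sup hne⟩
    rw [hsup]
    exact (smul_covBy_smul_iff hπ').2 (h.sup_covBy_dual hne)
  · have hcov := hinf.symm ▸ h.smul_dual_covBy_inf hne
    exact ⟨_, h.isLattice_inf hπ', hfix, hinf.symm, hcov, h.inf_covBy hne,
      (smul_covBy_smul_iff hπ').1 hcov⟩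

end SpecialLattice

attribute [local instance] RingHomInvPair.of_ringEquiv RingHomInvPair.of_ringEquiv_symm

section SymplecticSpace

section SymplecticForm

variable (K : Type*) [Field K]

/-- The symplectic form on `K⁴` of which `omegaForm` is the case `K = Kp p 𝔽`. -/
def symplecticForm : LinearMap.BilinForm K (Fin 4 → K) :=
  LinearMap.mk₂ K (fun x y => x 0 * y 3 - x 3 * y 0 + x 1 * y 2 - x 2 * y 1)
    (by intros; simp; ring) (by intros; simp; ring) (by intros; simp; ring) (by intros; simp; ring)

theorem symplecticForm_apply (x y : Fin 4 → K) :
    symplecticForm K x y = x 0 * y 3 - x 3 * y 0 + x 1 * y 2 - x 2 * y 1 := rfl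

theorem symplecticForm_isAlt : (symplecticForm K).IsAlt := fun x => by
  rw [symplecticForm_apply]
  ring

theorem symplecticForm_nondegenerate : (symplecticForm K).Nondegenerate := by
  refine (symplecticForm_isAlt K).isRefl.nondegenerate_iff_separatingLeft.2 fun x hx => ?_
  have h (i : Fin 4) := hx (Pi.single i 1)
  simp only [symplecticForm_apply] at h
  ext i
  fin_cases i
  · simpa using h 3
  · simpa using h 2
  · simpa using h 1
  · simpa using h 0

end SymplecticForm

variable {R K : Type*} [CommRing R] [Field K] [Algebra R K]

theorem symplecticForm_swap_mem_one (x y : Fin 4 → K)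
    (h : symplecticForm K x y ∈ (1 : Submodule R K)) :
    symplecticForm K y x ∈ (1 : Submodule R K) :=
  (symplecticForm_isAlt K).neg_eq x y ▸ neg_mem h

variable {φ : R ≃+* R} {σ : K ≃+* K}

theorem mem_one_iff_of_algebraMap_comm (hσ : ∀ r, σ (algebraMap R K r) = algebraMap R K (φ r))
    (x : K) : σ x ∈ (1 : Submodule R K) ↔ x ∈ (1 : Submodule R K) := by
  simp only [Submodule.mem_one]
  rw [φ.surjective.exists]
  exact exists_congr fun r => by rw [← hσ, σ.injective.eq_iff]

/-- The automorphism of `Kⁿ` applying `σ` to each coordinate, as a map semilinear for the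
automorphism `φ` of `R` induced by `σ`. -/
def coordwise (hσ : ∀ r, σ (algebraMap R K r) = algebraMap R K (φ r)) (n : Type*) :
    (n → K) ≃ₛₗ[(φ : R →+* R)] (n → K) where
  __ := AddEquiv.arrowCongr (Equiv.refl n) σ.toAddEquiv
  map_smul' c x := funext fun i => by simp [Algebra.smul_def, hσ]

theorem coordwise_apply (hσ : ∀ r, σ (algebraMap R K r) = algebraMap R K (φ r)) {n : Type*}
    (x : n → K) (i : n) : coordwise hσ n x i = σ (x i) := rfl

theorem symplecticForm_coordwise_mem_one_iff
    (hσ : ∀ r, σ (algebraMap R K r) = algebraMap R K (φ r)) (x y : Fin 4 → K) :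
    symplecticForm K (coordwise hσ (Fin 4) x) (coordwise hσ (Fin 4) y) ∈ (1 : Submodule R K) ↔
      symplecticForm K x y ∈ (1 : Submodule R K) := by
  rw [← mem_one_iff_of_algebraMap_comm hσ (symplecticForm K x y)]
  simp only [symplecticForm_apply, coordwise_apply, map_sub, map_add, map_mul]

variable (R K) in
/-- The standard lattice `Rⁿ` in `Kⁿ`. -/
def stdLattice (n : Type*) [Finite n] : Submodule R (n → K) :=
  Submodule.span R (Set.range (Pi.basisFun K n))

instance isLattice_stdLattice (n : Type*) [Finite n] :
    Submodule.IsLattice K (stdLattice R K n) where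
  fg := Submodule.fg_span (Set.finite_range _)
  span_eq_top := by rw [stdLattice, Submodule.span_span_of_tower, Module.Basis.span_eq]

theorem map_coordwise_stdLattice (hσ : ∀ r, σ (algebraMap R K r) = algebraMap R K (φ r))
    (n : Type*) [Finite n] :
    (stdLattice R K n).map (coordwise hσ n).toLinearMap = stdLattice R K n := by
  classical
  rw [stdLattice, Submodule.map_span, ← Set.range_comp]
  congr 2
  ext i j
  simp [coordwise_apply, Pi.single_apply, apply_ite]

end SymplecticSpace

section WittVector

variable {p : ℕ} [Fact p.Prime] {𝔽 : Type} [Field 𝔽] {A B D : Submodule (Wp p 𝔽) (N0 p 𝔽)}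

theorem isLattice_iff : IsLattice p 𝔽 D ↔ Submodule.IsLattice (Kp p 𝔽) D :=
  ⟨fun h => ⟨h.1, h.2⟩, fun h => ⟨h.fg, h.span_eq_top⟩⟩

theorem relLength_eq_colength : relLength p 𝔽 A B = colength A B :=
  (Module.coe_length _ _).symm

theorem SubD.colength_eq {d : ℕ} (h : SubD p 𝔽 d A B) : colength A B = d :=
  WithBot.coe_injective (relLength_eq_colength.symm.trans h.2)

theorem subD_one_iff : SubD p 𝔽 1 A B ↔ A ⋖ B := by
  refine ⟨fun h => (colength_eq_one_iff h.1).1 h.colength_eq, fun h => ⟨h.le, ?_⟩⟩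
  rw [relLength_eq_colength, (colength_eq_one_iff h.le).2 h]
  rfl

variable [CharP 𝔽 p]

theorem dualL_eq_dualSubmodule (D : Submodule (Wp p 𝔽) (N0 p 𝔽)) :
    dualL p 𝔽 D = (symplecticForm (Kp p 𝔽)).dualSubmodule D := by
  ext x
  simp only [LinearMap.BilinForm.mem_dualSubmodule, Submodule.mem_one]
  rfl

variable [IsAlgClosed 𝔽] {σ : Kp p 𝔽 ≃+* Kp p 𝔽}

theorem tauL_eq_map (hσ : IsWittFrobenius p 𝔽 σ) (D : Submodule (Wp p 𝔽) (N0 p 𝔽)) :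
    tauL p 𝔽 σ D = D.map (coordwise hσ (Fin 4)).toLinearMap := by
  conv_rhs => rw [← Submodule.span_eq D, Submodule.map_span]
  rfl

theorem memM.isSpecialLattice (hσ : IsWittFrobenius p 𝔽 σ) (h : memM p 𝔽 σ D) :
    IsSpecialLattice (symplecticForm (Kp p 𝔽)) (coordwise hσ (Fin 4)) (p : Wp p 𝔽) D := by
  obtain ⟨hD, hpd, hd, hpt, ht, hsup⟩ := h
  rw [relLength_eq_colength] at hsup
  simp only [tauL_eq_map hσ, dualL_eq_dualSubmodule] at hpd hd hpt ht hsup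
  exact ⟨isLattice_iff.1 hD, hpd.1, hpd.colength_eq, hd.1, hd.colength_eq, hpt.1, ht.1,
    ht.colength_eq, WithBot.coe_le_coe.1 hsup⟩

end WittVector

/-- For `D ∈ ℳ(𝔽)`: either (i) `τD = D` (and `pD^∨ ⊂² D ⊂² D^∨`);
or (ii) there is a `τ`-stable lattice `L` with `L = L^∨` and
`pL^∨ ⊂¹ pD^∨ ⊂² D ⊂¹ L`; or (iii) there is a `τ`-stable lattice `L` with `L = pL^∨`
and `pD^∨ ⊂¹ pL^∨`, `L ⊂¹ D ⊂² D^∨ ⊂¹ L^∨`. -/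
theorem vertex_lattice_trichotomy
    (p : ℕ) [Fact p.Prime] (hp : Odd p)
    (𝔽 : Type) [Field 𝔽] [IsAlgClosed 𝔽] [CharP 𝔽 p]
    (σ : Kp p 𝔽 ≃+* Kp p 𝔽) (hσ : IsWittFrobenius p 𝔽 σ)
    (D : Submodule (Wp p 𝔽) (N0 p 𝔽)) (hD : memM p 𝔽 σ D) :
    (tauL p 𝔽 σ D = D ∧ SubD p 𝔽 2 ((p : Wp p 𝔽) • dualL p 𝔽 D) D ∧
      SubD p 𝔽 2 D (dualL p 𝔽 D)) ∨
    (∃ L : Submodule (Wp p 𝔽) (N0 p 𝔽), IsLattice p 𝔽 L ∧ tauL p 𝔽 σ L = L ∧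
      L = dualL p 𝔽 L ∧
      SubD p 𝔽 1 ((p : Wp p 𝔽) • dualL p 𝔽 L) ((p : Wp p 𝔽) • dualL p 𝔽 D) ∧
      SubD p 𝔽 2 ((p : Wp p 𝔽) • dualL p 𝔽 D) D ∧
      SubD p 𝔽 1 D L) ∨
    (∃ L : Submodule (Wp p 𝔽) (N0 p 𝔽), IsLattice p 𝔽 L ∧ tauL p 𝔽 σ L = L ∧
      L = (p : Wp p 𝔽) • dualL p 𝔽 L ∧
      SubD p 𝔽 1 ((p : Wp p 𝔽) • dualL p 𝔽 D) ((p : Wp p 𝔽) • dualL p 𝔽 L) ∧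
      SubD p 𝔽 1 L D ∧ SubD p 𝔽 2 D (dualL p 𝔽 D) ∧
      SubD p 𝔽 1 (dualL p 𝔽 D) (dualL p 𝔽 L)) := by
  have hgen := vertex_lattice_trichotomy_general (symplecticForm_nondegenerate (Kp p 𝔽))
    symplecticForm_swap_mem_one (symplecticForm_coordwise_mem_one_iff hσ)
    (WittVector.irreducible p) (stdLattice (Wp p 𝔽) (Kp p 𝔽) (Fin 4))
    (map_coordwise_stdLattice hσ (Fin 4)) (hD.isSpecialLattice hσ)
  obtain ⟨-, hpD, hDd, -⟩ := hD
  simp only [hpD, hDd, and_true, true_and]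
  simpa only [subD_one_iff, isLattice_iff, tauL_eq_map hσ, dualL_eq_dualSubmodule] using hgen

end
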